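/- arXiv:2604.10395 — 7 statements merged into one kernel-verified Lean document; each statement's English description precedes it below -/
import Mathlib

section
/- The function h(x) := (log Γ(x+1))/x is strictly increasing on (0,∞). -/
open Real

/-- `h x = log Γ(x+1) / x`. -/
noncomputable def hGamma (x : ℝ) : ℝ := Real.log (Real.Gamma (x + 1)) / x

/-- `log Γ` is strictly convex, since `log Γ(x) = log Γ(x+1) - log x`. -/
theorem strictConvexOn_log_Gamma_aux :
    StrictConvexOn ℝ (Set.Ioi 0) (fun x : ℝ => Real.log (Real.Gamma x)) := by
  have h1 : ConvexOn ℝ (Set.Ioi (0 : ℝ)) (fun x : ℝ => Real.log (Real.Gamma (x + 1))) := by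
    have h := Real.convexOn_log_Gamma.translate_left (c := (1 : ℝ))
    refine h.subset ?_ (convex_Ioi 0)
    intro x hx
    simp only [Set.mem_preimage, Set.mem_Ioi] at hx ⊢
    linarith
  have h2 := h1.add_strictConvexOn strictConcaveOn_log_Ioi.neg
  refine h2.congr ?_
  intro x hx
  have hx' : (0 : ℝ) < x := hx
  have : Real.log (Real.Gamma (x + 1)) = Real.log x + Real.log (Real.Gamma x) := by
    rw [Real.Gamma_add_one hx'.ne', Real.log_mul hx'.ne' (Real.Gamma_pos_of_pos hx').ne']
  simp [this]

/-- The function `h(x) = log Γ(x+1) / x` is strictly increasing on `(0,∞)`. -/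
theorem hGamma_strictMonoOn : StrictMonoOn hGamma (Set.Ioi 0) := by
  intro x hx y hy hxy
  have hx' : (0 : ℝ) < x := hx
  have hy' : (0 : ℝ) < y := hy
  have h := strictConvexOn_log_Gamma_aux.secant_strict_mono (a := 1) (x := x + 1) (y := y + 1)
    (by simp) (by simp only [Set.mem_Ioi]; linarith) (by simp only [Set.mem_Ioi]; linarith)
    (by simpa using hx'.ne')
    (by simpa using hy'.ne') (by linarith)
  simpa [hGamma] using h
end

section
/- The function g(x) := h(exp(x)), where h(t) := (log Γ(t+1))/t, is strictly convex on ℝ. -/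
open Real

open Filter Topology in
/-- limit formula for `log Γ(x+1)` -/
lemma tendsto_Lseq (x : ℝ) (hx : 0 < x) :
    Tendsto (fun n : ℕ => x * log n - ∑ k ∈ Finset.range n, (log (x + (k + 1)) - log (k + 1)))
      atTop (𝓝 (log (Gamma (x + 1)))) := by
  have h := (Real.BohrMollerup.tendsto_log_gamma hx).const_add (log x)
  have e : log x + log (Gamma x) = log (Gamma (x + 1)) := by
    rw [Gamma_add_one hx.ne', log_mul hx.ne' (Gamma_pos_of_pos hx).ne']
  rw [e] at h
  refine h.congr fun n => ?_
  have hf : ∀ n : ℕ, log (n.factorial : ℝ) = ∑ k ∈ Finset.range n, log ((k : ℝ) + 1) := by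
    intro n
    induction n with
    | zero => simp
    | succ n ih =>
      rw [Finset.sum_range_succ, ← ih, Nat.factorial_succ, Nat.cast_mul, log_mul]
      · push_cast; ring
      · positivity
      · positivity
  rw [Real.BohrMollerup.logGammaSeq, Finset.sum_range_succ', Finset.sum_sub_distrib, hf]
  push_cast
  rw [add_zero]
  ring

/-- key inequality -/
lemma sum_key (x : ℝ) (hx : 0 ≤ x) (n : ℕ) :
    1 / (x + 2) ^ 3 - (n + 1 : ℝ) / ((x + (n + 1)) * (x + (n + 2))) ≤
      ∑ k ∈ Finset.range (n + 1), ((k + 1 : ℝ) - x) / (x + (k + 1)) ^ 3 := by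
  induction n with
  | zero =>
    simp only [zero_add, Finset.range_one, Finset.sum_singleton, Nat.cast_zero]
    rw [← sub_nonneg]
    have : (1 - x) / (x + 1) ^ 3 - (1 / (x + 2) ^ 3 - 1 / ((x + 1) * (x + 2))) =
      ((1 - x) * (x + 2) ^ 3 - (x + 1) ^ 3 + (x + 1) ^ 2 * (x + 2) ^ 2)
        / ((x + 1) ^ 3 * (x + 2) ^ 3) := by
      field_simp
      ring
    rw [this]
    apply div_nonneg _ (by positivity)
    ring_nf
    positivity
  | succ n ih =>
    rw [Finset.sum_range_succ]
    have hn : (0 : ℝ) ≤ n := Nat.cast_nonneg n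
    generalize hm : (n : ℝ) = m at *
    have hs : (m + 1) / ((x + (m + 1)) * (x + (m + 2)))
        - (m + 2) / ((x + (m + 2)) * (x + (m + 3))) ≤ ((m + 2) - x) / (x + (m + 2)) ^ 3 := by
      rw [← sub_nonneg]
      have : ((m + 2) - x) / (x + (m + 2)) ^ 3 - ((m + 1) / ((x + (m + 1)) * (x + (m + 2)))
        - (m + 2) / ((x + (m + 2)) * (x + (m + 3)))) =
        (((m + 2) - x) * (x + (m + 1)) * (x + (m + 3)) - (m + 1) * (x + (m + 2)) ^ 2 * (x + (m + 3))
          + (m + 2) * (x + (m + 2)) ^ 2 * (x + (m + 1)))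
          / ((x + (m + 2)) ^ 3 * (x + (m + 1)) * (x + (m + 3))) := by
        field_simp
        ring
      rw [this]
      apply div_nonneg _ (by positivity)
      ring_nf
      nlinarith [mul_nonneg hx hn]
    push_cast
    rw [hm]
    have e1 : m + 1 + 1 = m + 2 := by ring
    have e2 : m + 1 + 2 = m + 3 := by ring
    rw [e1, e2]
    linarith

/-- the derivative approximants -/
lemma P_nonneg (n : ℕ) (x : ℝ) (hx : 0 ≤ x) :
    0 ≤ x ^ 2 * (∑ k ∈ Finset.range (n + 1), 1 / (x + (k + 1)) ^ 2)
      - x * (log (n + 1 : ℕ) - ∑ k ∈ Finset.range (n + 1), 1 / (x + (k + 1)))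
      + (x * log (n + 1 : ℕ)
          - ∑ k ∈ Finset.range (n + 1), (log (x + (k + 1)) - log ((k : ℝ) + 1)))
      + x ^ 2 / (2 * (n + 1)) - (x / (x + 2)) ^ 2 / 4 := by
  set P : ℝ → ℝ := fun x => x ^ 2 * (∑ k ∈ Finset.range (n + 1), 1 / (x + (k + 1)) ^ 2)
      - x * (log (n + 1 : ℕ) - ∑ k ∈ Finset.range (n + 1), 1 / (x + (k + 1)))
      + (x * log (n + 1 : ℕ)
          - ∑ k ∈ Finset.range (n + 1), (log (x + (k + 1)) - log ((k : ℝ) + 1)))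
      + x ^ 2 / (2 * (n + 1)) - (x / (x + 2)) ^ 2 / 4 with hP
  have hd : ∀ x : ℝ, 0 ≤ x → HasDerivAt P
      (x * ((∑ k ∈ Finset.range (n + 1), ((k + 1 : ℝ) - x) / (x + (k + 1)) ^ 3)
        + 1 / (n + 1) - 1 / (x + 2) ^ 3)) x := by
    intro x hx
    have h1 : HasDerivAt (fun x : ℝ => ∑ k ∈ Finset.range (n + 1), 1 / (x + (k + 1)) ^ 2)
        (∑ k ∈ Finset.range (n + 1), -2 / (x + (k + 1)) ^ 3) x := by
      apply HasDerivAt.fun_sum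
      intro k _
      have hk : x + ((k : ℝ) + 1) ≠ 0 := by positivity
      have := (((hasDerivAt_id x).add_const ((k : ℝ) + 1)).pow 2).inv (by simpa using hk)
      simp only [one_div]
      refine HasDerivAt.congr_deriv this ?_
      simp
      field_simp
    have h2 : HasDerivAt (fun x : ℝ => ∑ k ∈ Finset.range (n + 1), 1 / (x + (k + 1)))
        (∑ k ∈ Finset.range (n + 1), -1 / (x + (k + 1)) ^ 2) x := by
      apply HasDerivAt.fun_sum
      intro k _
      have hk : x + ((k : ℝ) + 1) ≠ 0 := by positivity
      have := ((hasDerivAt_id x).add_const ((k : ℝ) + 1)).inv (by simpa using hk)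
      simp only [one_div]
      exact this
    have h3 : HasDerivAt (fun x : ℝ => ∑ k ∈ Finset.range (n + 1),
        (log (x + (k + 1)) - log ((k : ℝ) + 1)))
        (∑ k ∈ Finset.range (n + 1), 1 / (x + (k + 1))) x := by
      apply HasDerivAt.fun_sum
      intro k _
      have hk : x + ((k : ℝ) + 1) ≠ 0 := by positivity
      exact (((hasDerivAt_id x).add_const ((k : ℝ) + 1)).log hk).sub_const _
    have h4 : HasDerivAt (fun x : ℝ => (x / (x + 2)) ^ 2 / 4) (x / (x + 2) ^ 3) x := by
      have hk : x + 2 ≠ 0 := by positivity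
      have := (((hasDerivAt_id x).div ((hasDerivAt_id x).add_const 2) hk).pow 2).div_const 4
      refine HasDerivAt.congr_deriv this ?_
      simp
      field_simp
      ring
    have h5 : HasDerivAt (fun x : ℝ => x ^ 2) (2 * x) x := by simpa using hasDerivAt_pow 2 x
    have h6 := hasDerivAt_id x
    have := ((((h5.mul h1).sub (h6.mul (h2.const_sub (log (n + 1 : ℕ))))).add
      ((h6.mul_const (log (n + 1 : ℕ))).sub h3)).add (h5.div_const (2 * (n + 1)))).sub h4
    refine HasDerivAt.congr_deriv this ?_
    have e : ∑ k ∈ Finset.range (n + 1), ((k + 1 : ℝ) - x) / (x + (k + 1)) ^ 3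
        = (∑ k ∈ Finset.range (n + 1), 1 / (x + (k + 1)) ^ 2)
          + x * ∑ k ∈ Finset.range (n + 1), -2 / (x + (k + 1)) ^ 3 := by
      rw [Finset.mul_sum, ← Finset.sum_add_distrib]
      refine Finset.sum_congr rfl fun k _ => ?_
      have hk : x + ((k : ℝ) + 1) ≠ 0 := by positivity
      field_simp
      ring
    have e' : ∑ k ∈ Finset.range (n + 1), -1 / (x + (k + 1)) ^ 2
        = - ∑ k ∈ Finset.range (n + 1), 1 / (x + (k + 1)) ^ 2 := by
      rw [← Finset.sum_neg_distrib]
      exact Finset.sum_congr rfl fun k _ => by ring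
    rw [e, e']
    simp only [id]
    have hn : (n : ℝ) + 1 ≠ 0 := by positivity
    field_simp
    ring
  have hmono : MonotoneOn P (Set.Ici 0) := by
    apply monotoneOn_of_deriv_nonneg (convex_Ici 0)
    · exact fun x hx => (hd x hx).continuousAt.continuousWithinAt
    · intro x hx
      rw [interior_Ici] at hx
      exact (hd x (le_of_lt hx)).differentiableAt.differentiableWithinAt
    · intro x hx
      rw [interior_Ici] at hx
      have hx0 : 0 ≤ x := le_of_lt hx
      rw [(hd x hx0).deriv]
      apply mul_nonneg hx0
      have := sum_key x hx0 n
      have h2 : (n + 1 : ℝ) / ((x + (n + 1)) * (x + (n + 2))) ≤ 1 / (n + 1) := by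
        rw [div_le_div_iff₀ (by positivity) (by positivity)]
        have : 0 ≤ (n : ℝ) := Nat.cast_nonneg n
        nlinarith [mul_nonneg hx0 this, mul_nonneg hx0 hx0]
      linarith
  have := hmono (Set.mem_Ici.2 le_rfl) (Set.mem_Ici.2 hx) hx
  have h0 : P 0 = 0 := by simp [hP]
  rw [h0] at this
  exact this

lemma convex_approx (n : ℕ) :
    ConvexOn ℝ Set.univ (fun u : ℝ =>
      (exp u * log (n + 1 : ℕ)
        - ∑ k ∈ Finset.range (n + 1), (log (exp u + (k + 1)) - log ((k : ℝ) + 1))) / exp u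
      + exp u / (2 * (n + 1)) - log (exp u + 2) / 8) := by
  set L : ℝ → ℝ := fun x => x * log (n + 1 : ℕ)
        - ∑ k ∈ Finset.range (n + 1), (log (x + (k + 1)) - log ((k : ℝ) + 1)) with hL
  set L1 : ℝ → ℝ := fun x => log (n + 1 : ℕ) - ∑ k ∈ Finset.range (n + 1), 1 / (x + (k + 1))
    with hL1
  set L2 : ℝ → ℝ := fun x => ∑ k ∈ Finset.range (n + 1), 1 / (x + (k + 1)) ^ 2 with hL2
  have d1 : ∀ x, 0 < x → HasDerivAt L (L1 x) x := by
    intro x hx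
    have h3 : HasDerivAt (fun x : ℝ => ∑ k ∈ Finset.range (n + 1),
        (log (x + (k + 1)) - log ((k : ℝ) + 1)))
        (∑ k ∈ Finset.range (n + 1), 1 / (x + (k + 1))) x := by
      apply HasDerivAt.fun_sum
      intro k _
      have hk : x + ((k : ℝ) + 1) ≠ 0 := by positivity
      exact (((hasDerivAt_id x).add_const ((k : ℝ) + 1)).log hk).sub_const _
    have := ((hasDerivAt_id x).mul_const (log (n + 1 : ℕ))).sub h3
    rw [one_mul] at this
    exact this
  have d2 : ∀ x, 0 < x → HasDerivAt L1 (L2 x) x := by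
    intro x hx
    have h2 : HasDerivAt (fun x : ℝ => ∑ k ∈ Finset.range (n + 1), 1 / (x + (k + 1)))
        (∑ k ∈ Finset.range (n + 1), -1 / (x + (k + 1)) ^ 2) x := by
      apply HasDerivAt.fun_sum
      intro k _
      have hk : x + ((k : ℝ) + 1) ≠ 0 := by positivity
      have := ((hasDerivAt_id x).add_const ((k : ℝ) + 1)).inv (by simpa using hk)
      simp only [one_div]
      exact this
    refine HasDerivAt.congr_deriv (h2.const_sub (log (n + 1 : ℕ))) ?_
    rw [← Finset.sum_neg_distrib]
    exact Finset.sum_congr rfl fun k _ => by ring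
  set R : ℝ → ℝ := fun x => L1 x - L x / x + x / (2 * (n + 1)) - x / (x + 2) / 8 with hR
  have dR : ∀ x, 0 < x → HasDerivAt R (L2 x - (L1 x * x - L x) / x ^ 2 + 1 / (2 * (n + 1))
      - 1 / (x + 2) ^ 2 / 4) x := by
    intro x hx
    have h6 := hasDerivAt_id x
    have hk : x + 2 ≠ 0 := by positivity
    have := (((d2 x hx).sub ((d1 x hx).div h6 hx.ne')).add (h6.div_const (2 * (n + 1)))).sub
      ((h6.div (h6.add_const 2) hk).div_const 8)
    refine HasDerivAt.congr_deriv this ?_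
    simp only [id]
    field_simp
    ring
  have hmono : MonotoneOn R (Set.Ioi 0) := by
    apply monotoneOn_of_deriv_nonneg (convex_Ioi 0)
    · exact fun x hx => (dR x hx).continuousAt.continuousWithinAt
    · intro x hx
      rw [interior_Ioi] at hx
      exact (dR x hx).differentiableAt.differentiableWithinAt
    · intro x hx
      rw [interior_Ioi] at hx
      have hx0 : 0 < x := hx
      rw [(dR x hx).deriv]
      have := P_nonneg n x hx0.le
      change 0 ≤ x ^ 2 * L2 x - x * L1 x + L x + x ^ 2 / (2 * (n + 1)) - (x / (x + 2)) ^ 2 / 4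
        at this
      have e : L2 x - (L1 x * x - L x) / x ^ 2 + 1 / (2 * (n + 1)) - 1 / (x + 2) ^ 2 / 4
        = (x ^ 2 * L2 x - x * L1 x + L x + x ^ 2 / (2 * (n + 1)) - (x / (x + 2)) ^ 2 / 4)
          / x ^ 2 := by
        field_simp
        ring
      rw [e]
      positivity
  have dF : ∀ u : ℝ, HasDerivAt (fun u : ℝ => L (exp u) / exp u + exp u / (2 * (n + 1))
      - log (exp u + 2) / 8) (R (exp u)) u := by
    intro u
    have he := Real.hasDerivAt_exp u
    have hp := Real.exp_pos u
    have hk : exp u + 2 ≠ 0 := by positivity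
    have := (((((d1 _ hp).comp u he).div he hp.ne').add (he.div_const (2 * (n + 1)))).sub
      (((he.add_const 2).log hk).div_const 8))
    refine HasDerivAt.congr_deriv this ?_
    simp only [hR, Function.comp]
    field_simp
  change ConvexOn ℝ Set.univ (fun u : ℝ => L (exp u) / exp u + exp u / (2 * (n + 1))
      - log (exp u + 2) / 8)
  apply Monotone.convexOn_univ_of_deriv
  · exact fun u => (dF u).differentiableAt
  · intro a b hab
    rw [(dF a).deriv, (dF b).deriv]
    exact hmono (exp_pos a) (exp_pos b) (exp_le_exp.2 hab)

lemma strict_log : StrictConvexOn ℝ Set.univ (fun u : ℝ => log (exp u + 2) / 8) := by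
  have dF : ∀ u : ℝ, HasDerivAt (fun u : ℝ => log (exp u + 2) / 8)
      (exp u / (exp u + 2) / 8) u := by
    intro u
    have hk : exp u + 2 ≠ 0 := by positivity
    exact (((Real.hasDerivAt_exp u).add_const 2).log hk).div_const 8
  apply StrictMono.strictConvexOn_univ_of_deriv
  · exact continuous_iff_continuousAt.2 fun u => (dF u).continuousAt
  · intro a b hab
    rw [(dF a).deriv, (dF b).deriv]
    have h := exp_lt_exp.2 hab
    have ha := exp_pos a
    have hb := exp_pos b
    apply div_lt_div_of_pos_right _ (by norm_num)
    rw [div_lt_div_iff₀ (by positivity) (by positivity)]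
    nlinarith

open Filter Topology in
lemma convex_limit :
    ConvexOn ℝ Set.univ (fun u : ℝ => hGamma (exp u) - log (exp u + 2) / 8) := by
  have ht : ∀ u : ℝ, Tendsto (fun n : ℕ => (exp u * log (n + 1 : ℕ)
        - ∑ k ∈ Finset.range (n + 1), (log (exp u + (k + 1)) - log ((k : ℝ) + 1))) / exp u
      + exp u / (2 * (n + 1)) - log (exp u + 2) / 8) atTop
      (𝓝 (hGamma (exp u) - log (exp u + 2) / 8)) := by
    intro u
    have h1 := ((tendsto_add_atTop_iff_nat 1).2 (tendsto_Lseq (exp u) (exp_pos u))).div_const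
      (exp u)
    have h2 : Tendsto (fun n : ℕ => exp u / (2 * ((n : ℝ) + 1))) atTop (𝓝 0) := by
      have := (tendsto_one_div_add_atTop_nhds_zero_nat (𝕜 := ℝ)).const_mul (exp u / 2)
      rw [mul_zero] at this
      refine this.congr fun n => ?_
      field_simp
    have := (h1.add h2).sub_const (log (exp u + 2) / 8)
    rw [add_zero] at this
    exact this
  refine ⟨convex_univ, fun x hx y hy a b ha hb hab => ?_⟩
  exact le_of_tendsto_of_tendsto' (ht (a • x + b • y))
    (((ht x).const_smul a).add ((ht y).const_smul b))
    fun n => (convex_approx n).2 hx hy ha hb hab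

/-- The function `g(x) = h(exp x)`, where `h(t) = log Γ(t+1) / t`, is strictly convex on `ℝ`. -/
theorem strictConvexOn_hGamma_exp :
    StrictConvexOn ℝ Set.univ (fun x : ℝ => hGamma (Real.exp x)) := by
  have h := convex_limit.add_strictConvexOn strict_log
  have e : (fun u : ℝ => hGamma (exp u) - log (exp u + 2) / 8)
      + (fun u : ℝ => log (exp u + 2) / 8) = fun x : ℝ => hGamma (Real.exp x) := by
    funext u
    simp
  rw [e] at h
  exact h
end

section
/- The function q(s) := s·ψ′(s+1), where ψ′ is the trigamma function (the derivative of the digamma function ψ = (log Γ)′), is strictly increasing on (0,∞). -/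
open Real

/-- The trigamma function `ψ'`, the second derivative of `log Γ`. -/
noncomputable def trigamma : ℝ → ℝ :=
  deriv (deriv (fun x : ℝ => Real.log (Real.Gamma x)))

open Filter Topology

/-- The digamma function. -/
noncomputable def psiAux : ℝ → ℝ := deriv (fun x : ℝ => Real.log (Real.Gamma x))

lemma diff_logGamma {x : ℝ} (hx : 0 < x) :
    DifferentiableAt ℝ (fun x : ℝ => Real.log (Real.Gamma x)) x := by
  refine (Real.differentiableAt_Gamma (fun m => ?_)).log (Real.Gamma_pos_of_pos hx).ne'
  have : (0 : ℝ) ≤ m := Nat.cast_nonneg m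
  linarith

lemma psiAux_mono : MonotoneOn psiAux (Set.Ioi 0) := by
  have h := Real.convexOn_log_Gamma
  exact h.monotoneOn_deriv (fun x hx => diff_logGamma hx)

lemma psiAux_add_one {x : ℝ} (hx : 0 < x) : psiAux (x + 1) = psiAux x + 1 / x := by
  have h1 : HasDerivAt (fun y : ℝ => Real.log (Real.Gamma (y + 1))) (psiAux (x + 1)) x := by
    have := (diff_logGamma (show 0 < x + 1 by linarith)).hasDerivAt
    exact HasDerivAt.comp_add_const (f := fun x : ℝ => Real.log (Real.Gamma x)) x 1 this
  have h2 : HasDerivAt (fun y : ℝ => Real.log (Real.Gamma y) + Real.log y)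
      (psiAux x + 1 / x) x := by
    have := (diff_logGamma hx).hasDerivAt.add (Real.hasDerivAt_log hx.ne')
    rw [one_div]
    exact this
  refine h1.unique (h2.congr_of_eventuallyEq ?_)
  filter_upwards [lt_mem_nhds hx] with y hy
  rw [Real.Gamma_add_one hy.ne', Real.log_mul hy.ne' (Real.Gamma_pos_of_pos hy).ne']
  ring

lemma psiAux_add_nat {x : ℝ} (hx : 0 < x) (N : ℕ) :
    psiAux (x + N) = psiAux x + ∑ k ∈ Finset.range N, 1 / (x + k) := by
  induction N with
  | zero => simp
  | succ N ih =>
    rw [Finset.sum_range_succ, ← add_assoc, ← ih, ← psiAux_add_one (by positivity)]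
    push_cast
    ring_nf

lemma psiAux_hasSum {a x : ℝ} (ha : 0 < a) (hx : a ≤ x) :
    HasSum (fun k : ℕ => 1 / (a + k) - 1 / (x + k)) (psiAux x - psiAux a) := by
  have hx0 : 0 < x := lt_of_lt_of_le ha hx
  rw [hasSum_iff_tendsto_nat_of_nonneg]
  swap
  · intro k
    have : 1 / (x + k) ≤ 1 / (a + k) := by gcongr
    linarith
  obtain ⟨m, hm⟩ := exists_nat_ge x
  have key : ∀ N : ℕ, ∑ k ∈ Finset.range N, (1 / (a + k) - 1 / (x + k)) =
      (psiAux x - psiAux a) - (psiAux (x + N) - psiAux (a + N)) := by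
    intro N
    rw [psiAux_add_nat hx0, psiAux_add_nat ha, Finset.sum_sub_distrib]
    ring
  have hlim : Tendsto (fun N : ℕ => psiAux (x + N) - psiAux (a + N)) atTop (𝓝 0) := by
    have hb : Tendsto (fun N : ℕ => (m : ℝ) * (1 / (a + N))) atTop (𝓝 0) := by
      have : Tendsto (fun N : ℕ => a + (N : ℝ)) atTop atTop :=
        tendsto_atTop_add_const_left _ _ tendsto_natCast_atTop_atTop
      simpa using (this.inv_tendsto_atTop).const_mul (m : ℝ)
    refine squeeze_zero (fun N => ?_) (fun N => ?_) hb
    · have := psiAux_mono (a := a + N) (b := x + N) (show 0 < a + (N : ℝ) by positivity)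
        (show 0 < x + (N : ℝ) by positivity) (by linarith)
      linarith
    · have h1 := psiAux_mono (a := x + N) (b := a + N + m) (show 0 < x + (N : ℝ) by positivity)
        (show 0 < a + (N : ℝ) + m by positivity) (by linarith)
      rw [psiAux_add_nat (show 0 < a + (N : ℝ) by positivity)] at h1
      have h2 : ∑ k ∈ Finset.range m, 1 / (a + N + k) ≤ m * (1 / (a + N)) := by
        have := Finset.sum_le_card_nsmul (Finset.range m) (fun k : ℕ => 1 / (a + N + k))
          (1 / (a + N)) (fun k _ => by
            have : (0 : ℝ) ≤ k := Nat.cast_nonneg k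
            apply one_div_le_one_div_of_le (by positivity)
            linarith)
        simpa using this
      linarith
  simp_rw [key]
  simpa using hlim.const_sub (psiAux x - psiAux a)

lemma summable_aux {a : ℝ} (ha : 0 < a) : Summable (fun k : ℕ => 1 / (a + k) ^ 2) := by
  have h : Summable (fun k : ℕ => 1 / ((k : ℝ)) ^ 2) :=
    Real.summable_one_div_nat_pow.mpr (by norm_num)
  rw [← summable_nat_add_iff 1] at h ⊢
  refine Summable.of_nonneg_of_le (fun k => by positivity) (fun k => ?_) h
  apply one_div_le_one_div_of_le (by positivity)
  gcongr
  linarith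

lemma trigamma_hasSum {x : ℝ} (hx : 0 < x) :
    HasSum (fun k : ℕ => 1 / (x + k) ^ 2) (trigamma x) := by
  have ha : 0 < x / 2 := by linarith
  have hax : x / 2 < x := by linarith
  have hd : HasDerivAt (fun y => ∑' k : ℕ, (1 / (x / 2 + k) - 1 / (y + k)))
      (∑' k : ℕ, 1 / (x + k) ^ 2) x := by
    refine hasDerivAt_tsum_of_isPreconnected (t := Set.Ioi (x / 2)) (y₀ := x)
      (g := fun (k : ℕ) (y : ℝ) => 1 / (x / 2 + k) - 1 / (y + k))
      (g' := fun (k : ℕ) (y : ℝ) => 1 / (y + k) ^ 2)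
      (summable_aux ha) isOpen_Ioi isPreconnected_Ioi ?_ ?_ hax
      (psiAux_hasSum ha hax.le).summable hax
    · intro k y hy
      have hy : x / 2 < y := hy
      have hy0 : 0 < y + k := by
        have : (0 : ℝ) ≤ k := Nat.cast_nonneg k
        linarith
      have := (((hasDerivAt_id y).add_const (k : ℝ)).fun_inv hy0.ne').const_sub (1 / (x / 2 + k))
      convert this using 1
      · simp [one_div]
      · simp [neg_div]
    · intro k y hy
      have hy : x / 2 < y := hy
      rw [Real.norm_of_nonneg (by positivity)]
      gcongr
  have hp : HasDerivAt psiAux (∑' k : ℕ, 1 / (x + k) ^ 2) x := by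
    refine (hd.add_const (psiAux (x / 2))).congr_of_eventuallyEq ?_
    filter_upwards [lt_mem_nhds hax] with y hy
    rw [(psiAux_hasSum ha hy.le).tsum_eq]
    ring
  have : trigamma x = ∑' k : ℕ, 1 / (x + k) ^ 2 := hp.deriv
  rw [this]
  exact (summable_aux hx).hasSum

/-- The telescoping lower bound for the derivative of the partial sums. -/
lemma telescope {s : ℝ} (hs : 0 < s) (N : ℕ) :
    1 / (2 * (s + 1) ^ 2) - 2 / ((N : ℝ) + 1) ≤
      ∑ k ∈ Finset.range N, ((k : ℝ) + 1 - s) / (s + 1 + k) ^ 3 := by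
  have h : ∀ N : ℕ, 1 / (2 * (s + 1) ^ 2) - (1 / (s + 1 + N) + 1 / (2 * (s + 1 + N) ^ 2)
      - s / ((s + 1 + N) * (s + N))) ≤
      ∑ k ∈ Finset.range N, ((k : ℝ) + 1 - s) / (s + 1 + k) ^ 3 := by
    intro N
    induction N with
    | zero =>
      simp
      field_simp
      linarith
    | succ N ih =>
      rw [Finset.sum_range_succ]
      refine le_trans ?_ (add_le_add_left ih _)
      have hN : (0 : ℝ) ≤ N := Nat.cast_nonneg N
      push_cast
      obtain ⟨y, hy⟩ : ∃ y : ℝ, y = s + N := ⟨_, rfl⟩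
      have hy0 : 0 < y := by linarith
      have e1 : s + 1 + (N : ℝ) = y + 1 := by linarith
      have e2 : s + 1 + ((N : ℝ) + 1) = y + 2 := by linarith
      have e3 : s + ((N : ℝ) + 1) = y + 1 := by linarith
      have e4 : (N : ℝ) + 1 - s = y + 1 - 2 * s := by linarith
      rw [e1, e2, e3, e4, ← hy]
      have i1 : 1 / (y + 1) + 1 / (2 * (y + 1) ^ 2) - (1 / (y + 2) + 1 / (2 * (y + 2) ^ 2))
          ≤ 1 / (y + 1) ^ 2 := by
        have : 1 / (y + 1) ^ 2 - (1 / (y + 1) + 1 / (2 * (y + 1) ^ 2)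
          - (1 / (y + 2) + 1 / (2 * (y + 2) ^ 2))) = 1 / (2 * (y + 1) ^ 2 * (y + 2) ^ 2) := by
          field_simp
          ring
        have : 0 < 1 / (2 * (y + 1) ^ 2 * (y + 2) ^ 2) := by positivity
        linarith
      have i2 : 2 * s / (y + 1) ^ 3 ≤ s / ((y + 1) * y) - s / ((y + 2) * (y + 1)) := by
        have : s / ((y + 1) * y) - s / ((y + 2) * (y + 1)) - 2 * s / (y + 1) ^ 3
          = 2 * s / (y * (y + 1) ^ 3 * (y + 2)) := by
          field_simp
          ring
        have : 0 < 2 * s / (y * (y + 1) ^ 3 * (y + 2)) := by positivity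
        linarith
      have i3 : (y + 1 - 2 * s) / (y + 1) ^ 3 = 1 / (y + 1) ^ 2 - 2 * s / (y + 1) ^ 3 := by
        field_simp
      rw [i3]
      linarith
  refine le_trans ?_ (h N)
  have hN : (0 : ℝ) ≤ N := Nat.cast_nonneg N
  have j1 : 1 / (s + 1 + N) ≤ 1 / ((N : ℝ) + 1) :=
    one_div_le_one_div_of_le (by positivity) (by linarith)
  have j2 : 1 / (2 * (s + 1 + N) ^ 2) ≤ 1 / ((N : ℝ) + 1) :=
    one_div_le_one_div_of_le (by positivity) (by nlinarith)
  have j3 : 0 ≤ s / ((s + 1 + N) * (s + N)) := by positivity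
  have j4 : 2 / ((N : ℝ) + 1) = 1 / ((N : ℝ) + 1) + 1 / ((N : ℝ) + 1) := by ring
  linarith

lemma partial_bound {a b : ℝ} (ha : 0 < a) (hab : a < b) (N : ℕ) :
    (1 / (2 * (b + 1) ^ 2) - 2 / ((N : ℝ) + 1)) * (b - a) ≤
      b * ∑ k ∈ Finset.range N, 1 / (b + 1 + k) ^ 2
        - a * ∑ k ∈ Finset.range N, 1 / (a + 1 + k) ^ 2 := by
  have hder : ∀ s : ℝ, 0 < s →
      HasDerivAt (fun s : ℝ => ∑ k ∈ Finset.range N, s * (1 / (s + 1 + k) ^ 2))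
        (∑ k ∈ Finset.range N, ((k : ℝ) + 1 - s) / (s + 1 + k) ^ 3) s := by
    intro s hs
    refine HasDerivAt.fun_sum (fun k _ => ?_)
    have h0 : s + 1 + (k : ℝ) ≠ 0 := by positivity
    have h1 := ((((hasDerivAt_id' s).add_const (1 : ℝ)).add_const (k : ℝ)).fun_pow 2).fun_inv
      (pow_ne_zero 2 h0)
    have h2 := (hasDerivAt_id' s).fun_mul h1
    simp only [one_div]
    refine h2.congr_deriv ?_
    field_simp
    norm_num
    ring
  rw [Finset.mul_sum, Finset.mul_sum]
  obtain ⟨c, hc, hc2⟩ := exists_hasDerivAt_eq_slope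
    (fun s : ℝ => ∑ k ∈ Finset.range N, s * (1 / (s + 1 + k) ^ 2))
    (fun s => ∑ k ∈ Finset.range N, ((k : ℝ) + 1 - s) / (s + 1 + k) ^ 3) hab
    (fun s hs => (hder s (lt_of_lt_of_le ha hs.1)).continuousAt.continuousWithinAt)
    (fun s hs => hder s (lt_trans ha hs.1))
  have hc0 : 0 < c := lt_trans ha hc.1
  have ht := telescope hc0 N
  rw [hc2, le_div_iff₀ (by linarith)] at ht
  refine le_trans ?_ ht
  have : 1 / (2 * (b + 1) ^ 2) ≤ 1 / (2 * (c + 1) ^ 2) := by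
    have := hc.2.le
    gcongr
  exact mul_le_mul_of_nonneg_right (by linarith) (by linarith)

/-- The function `q(s) = s · ψ'(s+1)` is strictly increasing on `(0,∞)`. -/
theorem strictMonoOn_mul_trigamma :
    StrictMonoOn (fun s : ℝ => s * trigamma (s + 1)) (Set.Ioi 0) := by
  intro a ha b hb hab
  have ha : 0 < a := ha
  have hb : 0 < b := hb
  have la := ((trigamma_hasSum (show 0 < a + 1 by linarith)).tendsto_sum_nat).const_mul a
  have lb := ((trigamma_hasSum (show 0 < b + 1 by linarith)).tendsto_sum_nat).const_mul b
  have l2 : Tendsto (fun N : ℕ => 2 / ((N : ℝ) + 1)) atTop (𝓝 0) := by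
    have := (tendsto_one_div_add_atTop_nhds_zero_nat (𝕜 := ℝ)).const_mul 2
    simpa [div_eq_mul_inv] using this
  have l3 := (l2.const_sub (1 / (2 * (b + 1) ^ 2))).mul_const (b - a)
  have h := le_of_tendsto_of_tendsto' l3 (lb.sub la) (fun N => partial_bound ha hab N)
  have hp : 0 < (1 / (2 * (b + 1) ^ 2) - 0) * (b - a) := by
    have : 0 < b - a := by linarith
    rw [sub_zero]
    positivity
  show a * trigamma (a + 1) < b * trigamma (b + 1)
  linarith
end

section
/- For every s > 0, s·ψ′(s+1) = ∫_0^∞ exp(−r)·ρ(r/s) dr, where ρ(t) := t/(exp(t) − 1) and ψ′ is the trigamma function. -/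
open Real MeasureTheory

open Filter Topology in
theorem digamma_aux (x : ℝ) (hx : 1 < x) :
    HasSum (fun n : ℕ => 1 / (1 + (n : ℝ)) - 1 / (x + n))
      (deriv (fun x : ℝ => Real.log (Real.Gamma x)) x
        - deriv (fun x : ℝ => Real.log (Real.Gamma x)) 1) := by
  set f : ℝ → ℝ := fun x : ℝ => Real.log (Real.Gamma x) with hf
  have hd : ∀ y ∈ Set.Ioi (0 : ℝ), DifferentiableAt ℝ f y := by
    intro y hy
    have hy : 0 < y := hy
    refine DifferentiableAt.log (Real.differentiableAt_Gamma ?_) (Real.Gamma_pos_of_pos hy).ne'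
    intro m
    have : (0 : ℝ) ≤ m := Nat.cast_nonneg m
    linarith
  have hmono : MonotoneOn (deriv f) (Set.Ioi 0) :=
    ConvexOn.monotoneOn_deriv Real.convexOn_log_Gamma hd
  have hstep : ∀ y : ℝ, 0 < y → deriv f (y + 1) = deriv f y + 1 / y := by
    intro y hy
    have h1 : (fun z => f (z + 1)) =ᶠ[𝓝 y] fun z => f z + Real.log z := by
      filter_upwards [lt_mem_nhds hy] with z hz
      simp only [hf]
      rw [Real.Gamma_add_one hz.ne', Real.log_mul hz.ne' (Real.Gamma_pos_of_pos hz).ne', add_comm]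
    have h2 : HasDerivAt (fun z => f z + Real.log z) (deriv f y + 1 / y) y := by
      rw [one_div]
      exact (hd y hy).hasDerivAt.add (Real.hasDerivAt_log hy.ne')
    have h3 := h2.congr_of_eventuallyEq h1
    rw [← h3.deriv, deriv_comp_add_const]
  have hsum : ∀ (N : ℕ) (y : ℝ), 0 < y →
      deriv f (y + N) = deriv f y + ∑ n ∈ Finset.range N, 1 / (y + n) := by
    intro N y hy
    induction N with
    | zero => simp
    | succ N ih =>
      rw [Finset.sum_range_succ, ← add_assoc, ← ih, ← hstep _ (by positivity)]
      push_cast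
      rw [add_assoc]
  have hx0 : 0 < x := by linarith
  rw [hasSum_iff_tendsto_nat_of_nonneg]
  swap
  · intro n
    have : 1 / (x + n) ≤ 1 / (1 + (n : ℝ)) := by gcongr
    linarith
  obtain ⟨k, hk⟩ := exists_nat_ge x
  have h0 : Tendsto (fun N : ℕ => deriv f (x + N) - deriv f (1 + N)) atTop (𝓝 0) := by
    have hlim : Tendsto (fun N : ℕ => (k : ℝ) * (1 / ((N : ℝ) + 1))) atTop (𝓝 0) := by
      simpa using tendsto_one_div_add_atTop_nhds_zero_nat (𝕜 := ℝ) |>.const_mul (k : ℝ)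
    refine squeeze_zero ?_ ?_ hlim
    · intro N
      have : deriv f (1 + N) ≤ deriv f (x + N) :=
        hmono (show (0 : ℝ) < 1 + N by positivity) (show (0 : ℝ) < x + N by positivity)
          (by linarith)
      linarith
    · intro N
      have h1 : deriv f (x + N) ≤ deriv f ((1 + N) + k) :=
        hmono (show (0 : ℝ) < x + N by positivity) (show (0 : ℝ) < (1 + N) + k by positivity)
          (by linarith)
      rw [hsum k _ (by positivity)] at h1
      have h2 : ∑ n ∈ Finset.range k, 1 / ((1 + N : ℝ) + n) ≤ k * (1 / ((N : ℝ) + 1)) := by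
        have := Finset.sum_le_card_nsmul (Finset.range k)
          (fun n : ℕ => 1 / ((1 + N : ℝ) + n)) (1 / ((N : ℝ) + 1)) (by
            intro n _
            have : (0 : ℝ) ≤ n := Nat.cast_nonneg n
            apply one_div_le_one_div_of_le (by positivity)
            linarith)
        simpa using this
      linarith
  have h1 := h0.const_sub (deriv f x - deriv f 1)
  rw [sub_zero] at h1
  refine h1.congr ?_
  intro N
  rw [hsum N x hx0, hsum N 1 one_pos, Finset.sum_sub_distrib]
  ring

theorem summable_sq_aux (a : ℝ) (ha : 0 < a) :
    Summable (fun n : ℕ => 1 / (a + (n : ℝ)) ^ 2) := by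
  have h := (Real.summable_one_div_nat_add_rpow a 2).2 (by norm_num)
  refine h.congr ?_
  intro n
  rw [abs_of_pos (by positivity), add_comm]
  norm_num

theorem trigamma_aux (x : ℝ) (hx : 1 < x) :
    trigamma x = ∑' n : ℕ, 1 / (x + (n : ℝ)) ^ 2 := by
  set c := deriv (fun x : ℝ => Real.log (Real.Gamma x)) 1 with hc
  have h1 : HasDerivAt (fun z : ℝ => ∑' n : ℕ, (1 / (1 + (n : ℝ)) - 1 / (z + n)))
      (∑' n : ℕ, 1 / (x + (n : ℝ)) ^ 2) x := by
    refine hasDerivAt_tsum_of_isPreconnected (t := Set.Ioi (1 : ℝ)) (y₀ := x)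
      (g' := fun (n : ℕ) (z : ℝ) => 1 / (z + (n : ℝ)) ^ 2)
      (summable_sq_aux 1 one_pos) isOpen_Ioi isPreconnected_Ioi ?_ ?_ hx
      (digamma_aux x hx).summable hx
    · intro n y hy
      have hy : 1 < y := hy
      have hne : y + n ≠ 0 := by positivity
      have := (((hasDerivAt_id y).add_const (n : ℝ)).inv hne).const_sub (1 / (1 + (n : ℝ)))
      simpa [one_div, neg_div] using this
    · intro n y hy
      have hy : 1 < y := hy
      rw [Real.norm_of_nonneg (by positivity)]
      gcongr
  have h2 : deriv (fun x : ℝ => Real.log (Real.Gamma x)) =ᶠ[nhds x]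
      fun z => (∑' n : ℕ, (1 / (1 + (n : ℝ)) - 1 / (z + n))) + c := by
    filter_upwards [lt_mem_nhds hx] with z hz
    rw [(digamma_aux z hz).tsum_eq]
    ring
  exact ((h1.add_const c).congr_of_eventuallyEq h2).deriv

theorem integral_aux (b : ℝ) (hb : 0 < b) :
    ∫ r in Set.Ioi (0 : ℝ), r * Real.exp (-(b * r)) = 1 / b ^ 2 := by
  have h := Real.integral_rpow_mul_exp_neg_mul_Ioi (a := 2) (r := b) (by norm_num) hb
  norm_num at h
  rw [h]
  simp

/-- For every `s > 0`, `s · ψ'(s+1) = ∫_0^∞ exp(-r) ρ(r/s) dr` where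
`ρ(t) = t / (exp t - 1)`. -/
theorem mul_trigamma_eq_integral (s : ℝ) (hs : 0 < s) :
    s * trigamma (s + 1)
      = ∫ r in Set.Ioi (0 : ℝ),
          Real.exp (-r) * ((r / s) / (Real.exp (r / s) - 1)) := by
  set F : ℕ → ℝ → ℝ := fun n r => (1 / s) * (r * Real.exp (-((1 + (n + 1) / s) * r))) with hF
  have hbpos : ∀ n : ℕ, (0 : ℝ) < 1 + (n + 1) / s := fun n => by positivity
  have hint : ∀ n, ∫ r in Set.Ioi (0 : ℝ), F n r = s * (1 / (s + 1 + n) ^ 2) := by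
    intro n
    rw [hF]
    simp only
    rw [integral_const_mul, integral_aux _ (hbpos n)]
    have : s + 1 + n ≠ 0 := by positivity
    have h2 : 1 + ((n : ℝ) + 1) / s = (s + 1 + n) / s := by field_simp; ring
    rw [h2]
    field_simp
  have hI : ∀ n, Integrable (F n) (volume.restrict (Set.Ioi (0 : ℝ))) := by
    intro n
    apply MeasureTheory.Integrable.of_integral_ne_zero
    rw [hint]
    positivity
  have hnorm : ∀ n, ∫ r in Set.Ioi (0 : ℝ), ‖F n r‖ = s * (1 / (s + 1 + n) ^ 2) := by
    intro n
    rw [← hint n]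
    refine setIntegral_congr_fun measurableSet_Ioi ?_
    intro r hr
    have hr : 0 < r := hr
    exact Real.norm_of_nonneg (by positivity)
  have hS := hasSum_integral_of_summable_integral_norm hI (by
    simp only [hnorm]
    exact (summable_sq_aux (s + 1) (by linarith)).mul_left s)
  rw [trigamma_aux _ (by linarith), ← tsum_mul_left]
  simp only [hint] at hS
  rw [hS.tsum_eq]
  refine setIntegral_congr_fun measurableSet_Ioi ?_
  intro r hr
  have hr : 0 < r := hr
  have hq : Real.exp (-(r / s)) < 1 := by
    rw [Real.exp_lt_one_iff]
    have : 0 < r / s := by positivity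
    linarith
  have hg := (hasSum_geometric_of_lt_one (Real.exp_pos (-(r / s))).le hq).mul_left
    (Real.exp (-r) * (r / s) * Real.exp (-(r / s)))
  have he : 1 < Real.exp (r / s) := Real.one_lt_exp_iff.2 (by positivity)
  have e1 : Real.exp (-(r / s)) = (Real.exp (r / s))⁻¹ := Real.exp_neg _
  have e2 : Real.exp (-r) * ((r / s) / (Real.exp (r / s) - 1))
      = Real.exp (-r) * (r / s) * Real.exp (-(r / s)) * (1 - Real.exp (-(r / s)))⁻¹ := by
    rw [e1]
    have h1 : Real.exp (r / s) - 1 ≠ 0 := by linarith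
    have h3 : 1 - (Real.exp (r / s))⁻¹ = (Real.exp (r / s) - 1) / Real.exp (r / s) := by
      field_simp
    rw [h3, inv_div]
    field_simp
  simp only
  rw [e2, ← hg.tsum_eq]
  refine tsum_congr ?_
  intro n
  simp only [hF]
  rw [← Real.exp_nat_mul]
  have : Real.exp (-((1 + ((n : ℝ) + 1) / s) * r))
      = Real.exp (-r) * Real.exp (-(r / s)) * Real.exp (n * -(r / s)) := by
    rw [← Real.exp_add, ← Real.exp_add]
    congr 1
    ring
  rw [this]
  ring
end

section
/- Fix α > 0 and set a_n := (h(nα) − h(α))/log n for n ≥ 2, where h(x) := (log Γ(x+1))/x. Then a_n < 1 for every n ≥ 2, and lim_{n→∞} a_n = 1. -/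
open Real Filter

/-- Partial Euler expression for `log Γ(x+1)`. -/
noncomputable def eulerF (x : ℝ) (M : ℕ) : ℝ :=
  x * Real.log M + ∑ k ∈ Finset.range M, (Real.log ((k : ℝ) + 1) - Real.log (x + ((k : ℝ) + 1)))

lemma eulerF_eq (x : ℝ) (M : ℕ) :
    eulerF x M = Real.BohrMollerup.logGammaSeq x M + Real.log x := by
  have h : ∀ M : ℕ, Real.log (M.factorial : ℝ) = ∑ k ∈ Finset.range M, Real.log ((k : ℝ) + 1) := by
    intro M
    induction M with
    | zero => simp
    | succ m ih =>
      rw [Finset.sum_range_succ, ← ih, Nat.factorial_succ, Nat.cast_mul, Real.log_mul]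
      · push_cast; ring
      · positivity
      · positivity
  unfold eulerF Real.BohrMollerup.logGammaSeq
  rw [Finset.sum_range_succ', h, Finset.sum_sub_distrib]
  push_cast
  simp only [add_zero]
  ring

lemma eulerF_tendsto (x : ℝ) (hx : 0 < x) :
    Tendsto (eulerF x) atTop (nhds (Real.log (Real.Gamma (x + 1)))) := by
  have h := (Real.BohrMollerup.tendsto_log_gamma hx).add_const (Real.log x)
  rw [Real.Gamma_add_one hx.ne', Real.log_mul hx.ne' (Real.Gamma_pos_of_pos hx).ne', add_comm]
  refine h.congr fun M => ?_
  rw [eulerF_eq]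

lemma phi_strict (x s t : ℝ) (hx : 0 < x) (hs : 0 < s) (hst : s < t) :
    Real.log s - Real.log (x + s) < Real.log t - Real.log (x + t) := by
  have ht : 0 < t := hs.trans hst
  rw [← Real.log_div hs.ne' (by positivity), ← Real.log_div ht.ne' (by positivity)]
  apply Real.log_lt_log (by positivity)
  rw [div_lt_div_iff₀ (by positivity) (by positivity)]
  nlinarith

lemma block_sum (g : ℕ → ℝ) (hg : Monotone g) (n m : ℕ) (hn : 1 ≤ n) :
    ∑ k ∈ Finset.range (n * (m + 1)), g k ≤
      n * ∑ j ∈ Finset.range (m + 1), g (n * j + (n - 1)) - (g (n - 1) - g 0) := by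
  obtain ⟨p, rfl⟩ : ∃ p, n = p + 1 := ⟨n - 1, by omega⟩
  simp only [Nat.add_sub_cancel]
  induction m with
  | zero =>
    have : ∑ k ∈ Finset.range p, g (k + 1) ≤ ∑ k ∈ Finset.range p, g p :=
      Finset.sum_le_sum fun k hk => hg (by have := Finset.mem_range.1 hk; omega)
    simp only [Finset.sum_const, Finset.card_range, nsmul_eq_mul] at this
    simp only [zero_add, mul_one, Finset.sum_range_one, mul_zero]
    rw [Finset.sum_range_succ']
    push_cast
    linarith
  | succ m ih =>
    rw [Nat.mul_succ, Finset.sum_range_add, Finset.sum_range_succ _ (m + 1)]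
    have : ∑ k ∈ Finset.range (p + 1), g ((p + 1) * (m + 1) + k) ≤
        ∑ k ∈ Finset.range (p + 1), g ((p + 1) * (m + 1) + p) :=
      Finset.sum_le_sum fun k hk => hg (by have := Finset.mem_range.1 hk; omega)
    simp only [Finset.sum_const, Finset.card_range, nsmul_eq_mul] at this
    linarith

lemma logGamma_lt (α : ℝ) (hα : 0 < α) (n : ℕ) (hn : 2 ≤ n) :
    Real.log (Real.Gamma (n * α + 1)) < n * Real.log (Real.Gamma (α + 1)) + n * α * Real.log n := by
  have hn0 : (0 : ℝ) < n := by positivity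
  have hx : 0 < n * α := by positivity
  set g : ℕ → ℝ := fun k => Real.log ((k : ℝ) + 1) - Real.log (n * α + ((k : ℝ) + 1)) with hgdef
  have hg : StrictMono g := strictMono_nat_of_lt_succ fun k => by
    simp only [hgdef]
    apply phi_strict _ _ _ hx (by positivity)
    push_cast; linarith
  have hd : 0 < g (n - 1) - g 0 := sub_pos.2 (hg (by omega))
  have key : ∀ m : ℕ, eulerF (n * α) (n * (m + 1)) ≤
      n * eulerF α (m + 1) + n * α * Real.log n - (g (n - 1) - g 0) := by
    intro m
    have hb := block_sum g hg.monotone n m (by omega)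
    have hj : ∀ j : ℕ, g (n * j + (n - 1)) =
        Real.log ((j : ℝ) + 1) - Real.log (α + ((j : ℝ) + 1)) := by
      intro j
      simp only [hgdef]
      have e : (((n * j + (n - 1) : ℕ) : ℝ) + 1) = n * ((j : ℝ) + 1) := by
        push_cast [Nat.cast_sub (show 1 ≤ n by omega)]; ring
      rw [e, ← mul_add, Real.log_mul hn0.ne' (by positivity), Real.log_mul hn0.ne' (by positivity)]
      ring
    simp only [hj] at hb
    unfold eulerF
    rw [Nat.cast_mul, Real.log_mul hn0.ne' (by positivity)]
    simp only [hgdef] at hb ⊢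
    linarith
  have t1 : Tendsto (fun m : ℕ => eulerF (n * α) (n * (m + 1))) atTop
      (nhds (Real.log (Real.Gamma (n * α + 1)))) :=
    (eulerF_tendsto _ hx).comp
      (tendsto_atTop_mono (fun m => by simp only [id]; nlinarith) tendsto_id)
  have t2 : Tendsto (fun m : ℕ => n * eulerF α (m + 1) + n * α * Real.log n - (g (n - 1) - g 0))
      atTop (nhds (n * Real.log (Real.Gamma (α + 1)) + n * α * Real.log n - (g (n - 1) - g 0))) :=
    ((((eulerF_tendsto α hα).comp (tendsto_add_atTop_nat 1)).const_mul (n : ℝ)).add_const _).sub_const _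
  have := le_of_tendsto_of_tendsto' t1 t2 key
  linarith

lemma Gamma_lower (x : ℝ) (hx : 0 < x) : Real.exp (-x) * x ^ x ≤ Real.Gamma (x + 1) := by
  have hi := Real.GammaIntegral_convergent (s := x + 1) (by linarith)
  rw [Real.Gamma_eq_integral (by linarith)]
  simp only [add_sub_cancel_right] at hi ⊢
  have hsub : Set.Ioi x ⊆ Set.Ioi (0 : ℝ) := Set.Ioi_subset_Ioi hx.le
  calc Real.exp (-x) * x ^ x = ∫ t in Set.Ioi x, Real.exp (-t) * x ^ x := by
        rw [MeasureTheory.integral_mul_const, integral_exp_neg_Ioi]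
    _ ≤ ∫ t in Set.Ioi x, Real.exp (-t) * t ^ x := by
        apply MeasureTheory.setIntegral_mono_on
        · exact (integrableOn_exp_neg_Ioi x).mul_const _
        · exact hi.mono_set hsub
        · exact measurableSet_Ioi
        · intro t ht
          have : x ^ x ≤ t ^ x := Real.rpow_le_rpow hx.le (le_of_lt ht) hx.le
          gcongr
    _ ≤ ∫ t in Set.Ioi 0, Real.exp (-t) * t ^ x := by
        apply MeasureTheory.setIntegral_mono_set hi
        · filter_upwards [MeasureTheory.ae_restrict_mem measurableSet_Ioi] with t ht
          have : (0 : ℝ) < t := ht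
          simp only [Pi.zero_apply]
          positivity
        · exact hsub.eventuallyLE

lemma hGamma_lower (x : ℝ) (hx : 0 < x) : Real.log x - 1 ≤ hGamma x := by
  have h := Real.log_le_log (by positivity) (Gamma_lower x hx)
  rw [Real.log_mul (by positivity) (by positivity), Real.log_exp, Real.log_rpow hx] at h
  unfold hGamma
  rw [le_div_iff₀ hx]
  linarith

lemma aSeq_lt (α : ℝ) (hα : 0 < α) (n : ℕ) (hn : 2 ≤ n) :
    (hGamma (n * α) - hGamma α) / Real.log n < 1 := by
  have hn0 : (0 : ℝ) < n := by positivity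
  have hl : 0 < Real.log n := Real.log_pos (by exact_mod_cast hn)
  rw [div_lt_one hl, sub_lt_iff_lt_add]
  have h := logGamma_lt α hα n hn
  unfold hGamma
  rw [div_lt_iff₀ (by positivity)]
  have e : (Real.log n + Real.log (Real.Gamma (α + 1)) / α) * (n * α) =
    n * Real.log (Real.Gamma (α + 1)) + n * α * Real.log n := by
    field_simp
    ring
  rw [e]
  exact h

/-- For fixed `α > 0`, the sequence `a_n = (h(nα) - h(α)) / log n` (`n ≥ 2`) satisfies
`a_n < 1` for every `n ≥ 2` and `a_n → 1` as `n → ∞`. -/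
theorem aSeq_lt_one_and_tendsto_one (α : ℝ) (hα : 0 < α) :
    (∀ n : ℕ, 2 ≤ n → (hGamma (n * α) - hGamma α) / Real.log n < 1) ∧
    Tendsto (fun n : ℕ => (hGamma (n * α) - hGamma α) / Real.log n) atTop (nhds 1) := by
  refine ⟨aSeq_lt α hα, ?_⟩
  have hlog : Tendsto (fun n : ℕ => Real.log n) atTop atTop :=
    Real.tendsto_log_atTop.comp tendsto_natCast_atTop_atTop
  have hlow : Tendsto (fun n : ℕ => 1 + (Real.log α - 1 - hGamma α) / Real.log n) atTop (nhds 1) := by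
    simpa using (hlog.const_div_atTop (Real.log α - 1 - hGamma α)).const_add 1
  refine tendsto_of_tendsto_of_tendsto_of_le_of_le' hlow tendsto_const_nhds ?_ ?_
  · filter_upwards [eventually_ge_atTop 2] with n hn
    have hn0 : (0 : ℝ) < n := by positivity
    have hl : 0 < Real.log n := Real.log_pos (by exact_mod_cast hn)
    have h := hGamma_lower (n * α) (by positivity)
    rw [Real.log_mul hn0.ne' hα.ne'] at h
    rw [le_div_iff₀ hl, add_mul, div_mul_cancel₀ _ hl.ne']
    linarith
  · filter_upwards [eventually_ge_atTop 2] with n hn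
    exact (aSeq_lt α hα n hn).le
end

section
/- Fix α > 0 and set a_n := (h(nα) − h(α))/log n for n ≥ 2, where h(x) := (log Γ(x+1))/x. Then the sequence (a_n)_{n≥2} is strictly increasing. -/
open Real

/-- Telescoping lower bound. -/
lemma aux_sum (x : ℝ) (hx : 0 ≤ x) (n : ℕ) :
    1 / (x + 1) - 1 / (x + n + 1) - x / (x + 1/2)^2 + x / (x + n + 1/2)^2 ≤
      ∑ i ∈ Finset.range n, (((i:ℝ) + 1 - x) / (x + (i + 1))^3) := by
  induction n with
  | zero => simp
  | succ n ih =>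
    rw [Finset.sum_range_succ]
    have hn : (0:ℝ) ≤ n := Nat.cast_nonneg n
    push_cast
    obtain ⟨y, hy⟩ : ∃ y : ℝ, y = x + n + 1 := ⟨_, rfl⟩
    have hy1 : 1 ≤ y := by linarith
    have e1 : 1 / y - 1 / (y + 1) ≤ 1 / y ^ 2 := by
      rw [div_sub_div _ _ (by positivity) (by positivity), div_le_div_iff₀ (by positivity) (by positivity)]
      nlinarith
    have e2 : 2 / y ^ 3 ≤ 1 / (y - 1/2)^2 - 1 / (y + 1/2)^2 := by
      have h1 : 0 < y - 1/2 := by linarith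
      have : 1 / (y - 1/2)^2 - 1 / (y + 1/2)^2 = 2 * y / (y^2 - 1/4)^2 := by
        have : y^2 - 1/4 = (y - 1/2) * (y+1/2) := by ring
        rw [this]
        have h2 : y - 1/2 ≠ 0 := h1.ne'
        have h3 : y + 1/2 ≠ 0 := by positivity
        rw [div_sub_div _ _ (by positivity) (by positivity), mul_pow]
        congr 1
        ring
      rw [this, div_le_div_iff₀ (by positivity) (by have : 0 < y^2 - 1/4 := by nlinarith
                                                    positivity)]
      nlinarith
    have e3 : ((n:ℝ) + 1 - x) / (x + (n + 1))^3 = 1 / y^2 - x * (2 / y^3) := by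
      have h0 : y ≠ 0 := by positivity
      have : (n:ℝ) + 1 - x = y - 2 * x := by rw [hy]; ring
      rw [this, show x + ((n:ℝ) + 1) = y by rw [hy]; ring]
      field_simp
    have e4 := mul_le_mul_of_nonneg_left e2 hx
    rw [e3]
    have a1 : x + (n:ℝ) + 1/2 = y - 1/2 := by rw [hy]; ring
    have a2 : x + ((n:ℝ) + 1) + 1/2 = y + 1/2 := by rw [hy]; ring
    have a3 : x + ((n:ℝ) + 1) + 1 = y + 1 := by rw [hy]; ring
    rw [a1, ← hy] at ih
    rw [a2, a3]
    have b1 : x * (1 / (y - 1/2)^2 - 1 / (y + 1/2)^2) = x / (y - 1/2)^2 - x / (y + 1/2)^2 := by ring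
    rw [b1] at e4
    linarith

lemma aux_sum2 (x M : ℝ) (hx : 0 ≤ x) (hM : x ≤ M) (n : ℕ) :
    1 / (4 * (M + 1)^3) - 1 / ((n:ℝ) + 1) ≤
      ∑ i ∈ Finset.range n, (((i:ℝ) + 1 - x) / (x + (i + 1))^3) := by
  refine le_trans ?_ (aux_sum x hx n)
  have hn : (0:ℝ) ≤ n := Nat.cast_nonneg n
  have h1 : 1 / (x + n + 1) ≤ 1 / ((n:ℝ) + 1) :=
    one_div_le_one_div_of_le (by positivity) (by linarith)
  have h2 : 0 ≤ x / (x + n + 1/2)^2 := by positivity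
  have h3 : 1 / (x + 1) - x / (x + 1/2)^2 = 1 / (4 * ((x + 1) * (x + 1/2)^2)) := by
    have : x + 1 ≠ 0 := by positivity
    have : x + 1/2 ≠ 0 := by positivity
    rw [div_sub_div _ _ (by positivity) (by positivity), div_eq_div_iff (by positivity) (by positivity)]
    ring
  have h4 : 1 / (4 * (M + 1)^3) ≤ 1 / (4 * ((x + 1) * (x + 1/2)^2)) := by
    apply one_div_le_one_div_of_le (by positivity)
    have : (x + 1) * (x + 1/2)^2 ≤ (M + 1) * (M+1)^2 := by gcongr <;> linarith
    nlinarith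
  linarith

lemma aux_G (M : ℝ) (n : ℕ) (c : ℝ)
    (hc : c = 1 / (2 * ((n:ℝ) + 1)) - 1 / (8 * (M + 1)^3)) (x : ℝ) (hx : 0 ≤ x) (hxM : x ≤ M) :
    0 ≤ ∑ i ∈ Finset.range n, (x / (x + (i + 1)) - (Real.log (x + (i + 1)) - Real.log (i + 1))
      + x^2 / (x + (i + 1))^2) + c * x^2 := by
  set G : ℝ → ℝ := fun x => ∑ i ∈ Finset.range n, (x / (x + (i + 1)) -
    (Real.log (x + (i + 1)) - Real.log (i + 1)) + x^2 / (x + (i + 1))^2) + c * x^2 with hG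
  have hd : ∀ y, 0 ≤ y → HasDerivAt G
      (y * (∑ i ∈ Finset.range n, (((i:ℝ) + 1 - y) / (y + (i + 1))^3) + 2 * c)) y := by
    intro y hy
    have : HasDerivAt G (∑ i ∈ Finset.range n, (y * (((i:ℝ) + 1 - y) / (y + (i + 1))^3))
        + c * (2 * y)) y := by
      refine HasDerivAt.add (HasDerivAt.fun_sum fun i _ => ?_) ?_
      · have hp : y + ((i:ℝ) + 1) ≠ 0 := by positivity
        have ha : HasDerivAt (fun y : ℝ => y + ((i:ℝ) + 1)) 1 y := (hasDerivAt_id y).add_const _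
        have := (((hasDerivAt_id y).div ha hp).sub ((ha.log hp).sub_const (Real.log (i+1)))).add
          (((hasDerivAt_id y).pow 2).div (ha.pow 2) (pow_ne_zero 2 hp))
        refine this.congr_deriv ?_
        simp only [id, Pi.pow_apply]
        field_simp
        push_cast
        ring
      · simpa using ((hasDerivAt_id y).pow 2).const_mul c
    refine this.congr_deriv ?_
    rw [← Finset.mul_sum]; ring
  have hmono : MonotoneOn G (Set.Icc 0 M) := by
    refine monotoneOn_of_hasDerivWithinAt_nonneg (convex_Icc 0 M)
      (fun y hy => (hd y hy.1).continuousAt.continuousWithinAt)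
      (fun y hy => (hd y ((interior_subset hy).1)).hasDerivWithinAt) ?_
    intro y hy
    have hy := interior_subset hy
    have h1 := aux_sum2 y M hy.1 hy.2 n
    refine mul_nonneg hy.1 ?_
    have : 2 * c = 1 / ((n:ℝ) + 1) - 1 / (4 * (M + 1)^3) := by
      have : M + 1 ≠ 0 := by linarith [hy.1, hy.2]
      rw [hc]; field_simp; ring
    linarith
  have := hmono ⟨le_rfl, hx.trans hxM⟩ ⟨hx, hxM⟩ hx
  have h0 : G 0 = 0 := by simp [hG]
  rw [h0] at this
  exact this

/-- The approximants are convex. -/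
lemma aux_convex (M : ℝ) (hM : 0 < M) (n : ℕ) (c : ℝ)
    (hc : c = 1 / (2 * ((n:ℝ) + 1)) - 1 / (8 * (M + 1)^3)) :
    ConvexOn ℝ (Set.Iic (Real.log M)) (fun t => (Real.log n - (∑ i ∈ Finset.range n,
      (Real.log (Real.exp t + (i + 1)) - Real.log (i + 1))) / Real.exp t) + c * Real.exp t) := by
  have hs : ∀ t : ℝ, HasDerivAt (fun t => ∑ i ∈ Finset.range n,
      (Real.log (Real.exp t + ((i:ℝ) + 1)) - Real.log (i + 1)))
      (∑ i ∈ Finset.range n, Real.exp t / (Real.exp t + ((i:ℝ) + 1))) t := by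
    intro t
    refine HasDerivAt.fun_sum fun i _ => ?_
    exact (((Real.hasDerivAt_exp t).add_const _).log (by positivity)).sub_const _
  have hs2 : ∀ t : ℝ, HasDerivAt (fun t => ∑ i ∈ Finset.range n,
      1 / (Real.exp t + ((i:ℝ) + 1)))
      (∑ i ∈ Finset.range n, - (Real.exp t / (Real.exp t + ((i:ℝ) + 1))^2)) t := by
    intro t
    refine HasDerivAt.fun_sum fun i _ => ?_
    have hp : Real.exp t + ((i:ℝ) + 1) ≠ 0 := by positivity
    refine ((hasDerivAt_const t (1:ℝ)).div ((Real.hasDerivAt_exp t).add_const _) hp).congr_deriv ?_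
    ring
  have hq : ∀ t : ℝ, HasDerivAt (fun t => (∑ i ∈ Finset.range n,
      (Real.log (Real.exp t + ((i:ℝ) + 1)) - Real.log (i + 1))) / Real.exp t)
      (∑ i ∈ Finset.range n, 1 / (Real.exp t + ((i:ℝ) + 1)) - (∑ i ∈ Finset.range n,
      (Real.log (Real.exp t + ((i:ℝ) + 1)) - Real.log (i + 1))) / Real.exp t) t := by
    intro t
    have he := (Real.exp_pos t).ne'
    refine ((hs t).div (Real.hasDerivAt_exp t) he).congr_deriv ?_
    have : ∑ i ∈ Finset.range n, Real.exp t / (Real.exp t + ((i:ℝ) + 1)) =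
        Real.exp t * ∑ i ∈ Finset.range n, 1 / (Real.exp t + ((i:ℝ) + 1)) := by
      rw [Finset.mul_sum]; refine Finset.sum_congr rfl fun i _ => ?_
      ring
    rw [this]
    field_simp
  have h1 : ∀ t : ℝ, HasDerivAt (fun t => (Real.log n - (∑ i ∈ Finset.range n,
      (Real.log (Real.exp t + ((i:ℝ) + 1)) - Real.log (i + 1))) / Real.exp t) + c * Real.exp t)
      (-(∑ i ∈ Finset.range n, 1 / (Real.exp t + ((i:ℝ) + 1)) - (∑ i ∈ Finset.range n,
      (Real.log (Real.exp t + ((i:ℝ) + 1)) - Real.log (i + 1))) / Real.exp t) + c * Real.exp t) t :=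
    fun t => ((hq t).const_sub _).add ((Real.hasDerivAt_exp t).const_mul c)
  have h2 := fun t : ℝ => (((hs2 t).sub (hq t)).neg).add ((Real.hasDerivAt_exp t).const_mul c)
  refine convexOn_of_hasDerivWithinAt2_nonneg (convex_Iic _)
    (fun t _ => (h1 t).continuousAt.continuousWithinAt)
    (fun t _ => (h1 t).hasDerivWithinAt) (fun t _ => (h2 t).hasDerivWithinAt) ?_
  intro t ht
  have ht : t ≤ Real.log M := Set.mem_Iic.mp (interior_subset ht)
  have hx : Real.exp t ≤ M := by
    rw [← Real.exp_log hM]; exact Real.exp_le_exp.mpr ht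
  have hG := aux_G M n c hc (Real.exp t) (Real.exp_pos t).le hx
  have hpos := Real.exp_pos t
  generalize Real.exp t = x at *
  have : 0 ≤ x⁻¹ * (∑ i ∈ Finset.range n, (x / (x + (i + 1)) -
    (Real.log (x + (i + 1)) - Real.log (i + 1)) + x^2 / (x + (i + 1))^2) + c * x^2) := by positivity
  refine this.trans_eq ?_
  have hx0 := hpos.ne'
  have e1 : ∑ i ∈ Finset.range n, x / (x + ((i:ℝ) + 1)) =
      x * ∑ i ∈ Finset.range n, 1 / (x + ((i:ℝ) + 1)) := by
    rw [Finset.mul_sum]; exact Finset.sum_congr rfl fun i _ => by ring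
  have e2 : ∑ i ∈ Finset.range n, x^2 / (x + ((i:ℝ) + 1))^2 =
      x * ∑ i ∈ Finset.range n, x / (x + ((i:ℝ) + 1))^2 := by
    rw [Finset.mul_sum]; exact Finset.sum_congr rfl fun i _ => by ring
  rw [Finset.sum_add_distrib, Finset.sum_sub_distrib, e1, e2, Finset.sum_neg_distrib]
  field_simp
  ring

lemma aux_tendsto (x : ℝ) (hx : 0 < x) :
    Filter.Tendsto (fun n : ℕ => Real.log n - (∑ i ∈ Finset.range n,
      (Real.log (x + (i + 1)) - Real.log (i + 1))) / x) Filter.atTop (nhds (hGamma x)) := by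
  have h := ((Real.BohrMollerup.tendsto_log_gamma hx).add_const (Real.log x)).div_const x
  have e : (Real.log (Real.Gamma x) + Real.log x) / x = hGamma x := by
    rw [hGamma, Real.Gamma_add_one hx.ne', Real.log_mul hx.ne' (Real.Gamma_pos_of_pos hx).ne',
      add_comm]
  rw [e] at h
  refine h.congr fun n => ?_
  have hf : ∀ n : ℕ, Real.log (n.factorial : ℝ) = ∑ i ∈ Finset.range n, Real.log ((i:ℝ) + 1) := by
    intro n
    induction n with
    | zero => simp
    | succ n ih =>
      rw [Finset.sum_range_succ, ← ih, Nat.factorial_succ]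
      push_cast
      rw [Real.log_mul (by positivity) (by positivity), add_comm]
  rw [Real.BohrMollerup.logGammaSeq, Finset.sum_range_succ', hf, Finset.sum_sub_distrib]
  push_cast
  field_simp
  simp only [add_zero]
  ring

lemma aux_strict (M : ℝ) (hM : 0 < M) :
    StrictConvexOn ℝ (Set.Iic (Real.log M)) (fun t => hGamma (Real.exp t)) := by
  have hδ : 0 < 1 / (8 * (M + 1)^3) := by positivity
  set δ := 1 / (8 * (M + 1)^3) with hδd
  have hlim : ∀ t : ℝ, Filter.Tendsto (fun n : ℕ => (Real.log n - (∑ i ∈ Finset.range n,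
      (Real.log (Real.exp t + (i + 1)) - Real.log (i + 1))) / Real.exp t)
        + (1 / (2 * ((n:ℝ) + 1)) - δ) * Real.exp t) Filter.atTop
      (nhds (hGamma (Real.exp t) + (0 - δ) * Real.exp t)) := by
    intro t
    refine (aux_tendsto _ (Real.exp_pos t)).add (Filter.Tendsto.mul_const _
      (Filter.Tendsto.sub_const ?_ _))
    have := (tendsto_one_div_add_atTop_nhds_zero_nat (𝕜 := ℝ)).const_mul (1/2)
    rw [mul_zero] at this
    refine this.congr fun n => ?_
    field_simp
  have hconv : ConvexOn ℝ (Set.Iic (Real.log M))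
      (fun t => hGamma (Real.exp t) + (0 - δ) * Real.exp t) := by
    refine ⟨convex_Iic _, fun s hs t ht a b ha hb hab => ?_⟩
    exact le_of_tendsto_of_tendsto' (hlim _) (((hlim s).const_smul a).add ((hlim t).const_smul b))
      fun n => (aux_convex M hM n _ rfl).2 hs ht ha hb hab
  refine ⟨convex_Iic _, fun s hs t ht hst a b ha hb hab => ?_⟩
  have h1 := hconv.2 hs ht ha.le hb.le hab
  have h2 := strictConvexOn_exp.2 (Set.mem_univ s) (Set.mem_univ t) hst ha hb hab
  simp only [smul_eq_mul] at *
  nlinarith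

/-- For fixed `α > 0`, the sequence `a_n = (h(nα) - h(α)) / log n` is strictly increasing
on `n ≥ 2`. -/
theorem aSeq_strictMonoOn (α : ℝ) (hα : 0 < α) :
    StrictMonoOn (fun n : ℕ => (hGamma (n * α) - hGamma α) / Real.log n)
      {n : ℕ | 2 ≤ n} := by
  intro n hn m hm hnm
  have hn : 2 ≤ n := hn
  have hn1 : (2:ℝ) ≤ n := by exact_mod_cast hn
  have hnm' : (n:ℝ) < m := by exact_mod_cast hnm
  have hln : 0 < Real.log n := Real.log_pos (by linarith)
  have hlm : Real.log n < Real.log m := Real.log_lt_log (by linarith) hnm'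
  have hM : 0 < (m:ℝ) * α := by
    have : (0:ℝ) < m := by linarith
    positivity
  have en : Real.log (n * α) = Real.log n + Real.log α := Real.log_mul (by linarith) hα.ne'
  have em : Real.log (m * α) = Real.log m + Real.log α := Real.log_mul (by linarith) hα.ne'
  have := (aux_strict _ hM).secant_strict_mono (a := Real.log α) (x := Real.log (n * α))
    (y := Real.log (m * α)) (by rw [Set.mem_Iic]; linarith) (by rw [Set.mem_Iic]; linarith)
    (by rw [Set.mem_Iic]) (by linarith) (by linarith) (by linarith)
  rw [Real.exp_log hα, Real.exp_log hM, Real.exp_log (by have : (0:ℝ) < n := by linarith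
                                                         positivity), en, em,
    add_sub_cancel_right, add_sub_cancel_right] at this
  exact this
end

section
/- Let X_1 be a positive random variable with strictly positive density f on (0,∞) satisfying lim_{x→∞} (−log f(x))/x^β = 1 for some β > 0. Then for every constant C > 1, lim_{x→∞} P(X_1 > x)/P(X_1 > x/C) = 0. -/
open MeasureTheory Filter Real

/-- Let `X` be a positive random variable with strictly positive density `f` on `(0,∞)`
satisfying `-log f(x) / x^β → 1` as `x → ∞` for some `β > 0`. Then for every `C > 1`,
`P(X > x) / P(X > x/C) → 0` as `x → ∞`. -/
theorem tendsto_tail_ratio_zero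
    {Ω : Type*} [MeasurableSpace Ω] (P : Measure Ω) [IsProbabilityMeasure P]
    (X : Ω → ℝ) (hmeas : Measurable X)
    (f : ℝ → ℝ)
    (hdist : Measure.map X P = volume.withDensity (fun x => ENNReal.ofReal (f x)))
    (hsupp : ∀ x ≤ (0 : ℝ), f x = 0)
    (hpos : ∀ x > (0 : ℝ), 0 < f x)
    (β : ℝ) (hβ : 0 < β)
    (htail : Tendsto (fun x => -Real.log (f x) / x ^ β) atTop (nhds 1)) :
    ∀ C : ℝ, 1 < C →
      Tendsto (fun x => (P {ω | x < X ω}).toReal / (P {ω | x / C < X ω}).toReal)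
        atTop (nhds 0) := by
  intro C hC
  have hC0 : 0 < C := by linarith
  -- pointwise comparison of the densities
  have hdiv : Tendsto (fun x : ℝ => x / C) atTop atTop := tendsto_id.atTop_div_const hC0
  have hlog : Tendsto (fun x => Real.log (f (x / C)) - Real.log (f x)) atTop atTop := by
    have h1 := htail.comp hdiv
    have h2 := htail.sub (h1.const_mul (C ^ β)⁻¹)
    have hcpos : 0 < 1 - (C ^ β)⁻¹ * 1 := by
      have := inv_lt_one_of_one_lt₀ (Real.one_lt_rpow hC hβ)
      linarith
    have h3 := (tendsto_rpow_atTop hβ).atTop_mul_pos hcpos h2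
    refine h3.congr' ?_
    filter_upwards [eventually_gt_atTop (0 : ℝ)] with x hx
    have hx1 : 0 < x ^ β := Real.rpow_pos_of_pos hx β
    have hx2 : 0 < C ^ β := Real.rpow_pos_of_pos hC0 β
    simp only [Function.comp]
    rw [Real.div_rpow hx.le hC0.le]
    field_simp
    ring
  have hpt : ∀ δ : ℝ, 0 < δ → ∀ᶠ x in atTop, f x ≤ δ * f (x / C) := by
    intro δ hδ
    filter_upwards [hlog.eventually_ge_atTop (-Real.log δ), eventually_gt_atTop (0 : ℝ)]
      with x hx hx0
    have hf1 := hpos x hx0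
    have hf2 := hpos (x / C) (div_pos hx0 hC0)
    rw [← Real.log_le_log_iff hf1 (by positivity), Real.log_mul hδ.ne' hf2.ne']
    linarith
  have htl : ∀ y : ℝ, P {ω | y < X ω} = ∫⁻ t in Set.Ioi y, ENNReal.ofReal (f t) := by
    intro y
    rw [← withDensity_apply _ measurableSet_Ioi, ← hdist, Measure.map_apply hmeas measurableSet_Ioi]
    rfl
  have hscale : ∀ y : ℝ, ∫⁻ t in Set.Ioi y, ENNReal.ofReal (f (t / C))
      = ENNReal.ofReal C * ∫⁻ t in Set.Ioi (y / C), ENNReal.ofReal (f t) := by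
    intro y
    have hne : C⁻¹ ≠ 0 := (inv_pos.2 hC0).ne'
    have hemb : MeasurableEmbedding (fun t : ℝ => C⁻¹ * t) := measurableEmbedding_mulLeft₀ hne
    have hm := Real.map_volume_mul_left hne
    rw [inv_inv, abs_of_pos hC0] at hm
    have hset : (fun t : ℝ => C⁻¹ * t) ⁻¹' Set.Ioi (y / C) = Set.Ioi y := by
      ext t
      simp only [Set.mem_preimage, Set.mem_Ioi]
      rw [inv_mul_eq_div, div_lt_div_iff_of_pos_right hC0]
    have h4 : ∫⁻ t in Set.Ioi (y / C), ENNReal.ofReal (f t)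
        ∂(Measure.map (fun t : ℝ => C⁻¹ * t) volume)
        = ∫⁻ t in Set.Ioi y, ENNReal.ofReal (f (C⁻¹ * t)) := by
      rw [hemb.restrict_map, hemb.lintegral_map, hset]
    have hm' : Measure.map (fun t : ℝ => C⁻¹ * t) volume = ENNReal.ofReal C • volume := hm
    rw [hm', Measure.restrict_smul, lintegral_smul_measure, smul_eq_mul] at h4
    rw [h4]
    simp only [inv_mul_eq_div]
  rw [Metric.tendsto_nhds]
  intro ε hε
  have hδ : 0 < ε / 2 / C := by positivity
  obtain ⟨x0, hx0⟩ := eventually_atTop.1 (hpt _ hδ)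
  filter_upwards [eventually_ge_atTop x0] with x hx
  have key : P {ω | x < X ω} ≤ ENNReal.ofReal (ε / 2) * P {ω | x / C < X ω} := by
    rw [htl, htl]
    calc ∫⁻ t in Set.Ioi x, ENNReal.ofReal (f t)
        ≤ ∫⁻ t in Set.Ioi x, ENNReal.ofReal (ε / 2 / C) * ENNReal.ofReal (f (t / C)) := by
          refine lintegral_mono_ae ?_
          filter_upwards [ae_restrict_mem measurableSet_Ioi] with t ht
          rw [← ENNReal.ofReal_mul hδ.le]
          exact ENNReal.ofReal_le_ofReal (hx0 t (hx.trans (le_of_lt ht)))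
      _ = ENNReal.ofReal (ε / 2) * ∫⁻ t in Set.Ioi (x / C), ENNReal.ofReal (f t) := by
          rw [lintegral_const_mul' _ _ ENNReal.ofReal_ne_top, hscale, ← mul_assoc,
            ← ENNReal.ofReal_mul hδ.le, div_mul_cancel₀ _ hC0.ne']
  have key2 := ENNReal.toReal_mono
    (ENNReal.mul_ne_top ENNReal.ofReal_ne_top (measure_ne_top P _)) key
  rw [ENNReal.toReal_mul, ENNReal.toReal_ofReal (by positivity)] at key2
  have h5 := div_le_of_le_mul₀ ENNReal.toReal_nonneg (by positivity) key2
  rw [Real.dist_eq, sub_zero, abs_of_nonneg (by positivity)]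
  linarith
end
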